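/- Let Q(x,y) = x⁴ + y⁴ − 6x²y² and G(x,y) = Q(x,y) · log(x² + y²), defined for (x,y) ∈ ℝ² \ {(0,0)}. Then for every pair i, j ∈ {1,2}, the second partial derivative ∂ᵢ∂ⱼ(ΔG) is bounded on the punctured unit ball B₁ \ {0}: there exists M > 0 such that |∂ᵢ∂ⱼΔG(x,y)| ≤ M for all (x,y) with 0 < x² + y² < 1. -/

import Mathlib

/-!
Write `s = x² + y²`. Away from the origin `Q` and `log s` are harmonic, so
`ΔG = 2 ∇Q · ∇(log s) = 4 (x Qₓ + y Q_y) / s = 16 Q / s` by Euler's identity for the quartic form `Q`.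
Since `Q = s² - 8x²y²`, this is `16 s - 128 x²y²/s`, which is homogeneous of degree `2`; its second
partial derivatives are explicit quotients of sextic forms by `s³`, hence bounded.
All derivatives are computed in closed form on the punctured plane; `pdx_eq` and `pdy_eq` allow
replacing a function by its closed form before differentiating, because the punctured plane is open.
-/

/-- Partial derivative in the first variable. -/
noncomputable def pdx (f : ℝ → ℝ → ℝ) (x y : ℝ) : ℝ := deriv (fun t => f t y) x

/-- Partial derivative in the second variable. -/
noncomputable def pdy (f : ℝ → ℝ → ℝ) (x y : ℝ) : ℝ := deriv (fun t => f x t) y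

/-- Partial derivative in the `i`-th variable, `i ∈ {1, 2}` encoded as `Fin 2`. -/
noncomputable def pd (i : Fin 2) : (ℝ → ℝ → ℝ) → ℝ → ℝ → ℝ :=
  if i = 0 then pdx else pdy

/-- The Laplacian `Δf = ∂²f/∂x² + ∂²f/∂y²`. -/
noncomputable def lap (f : ℝ → ℝ → ℝ) (x y : ℝ) : ℝ :=
  pdx (pdx f) x y + pdy (pdy f) x y

/-- The polynomial `Q(x,y) = x⁴ + y⁴ − 6 x² y²`. -/
def Q (x y : ℝ) : ℝ := x ^ 4 + y ^ 4 - 6 * x ^ 2 * y ^ 2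

/-- `G(x,y) = Q(x,y) log(x² + y²)`. -/
noncomputable def G (x y : ℝ) : ℝ := Q x y * Real.log (x ^ 2 + y ^ 2)

theorem pdx_eq {f g g' : ℝ → ℝ → ℝ}
    (h : ∀ x y, 0 < x ^ 2 + y ^ 2 → f x y = g x y)
    (h' : ∀ x y, 0 < x ^ 2 + y ^ 2 → HasDerivAt (fun t => g t y) (g' x y) x) :
    ∀ x y, 0 < x ^ 2 + y ^ 2 → pdx f x y = g' x y := by
  intro x y hs
  have ho : ∀ᶠ t in nhds x, 0 < t ^ 2 + y ^ 2 :=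
    (by fun_prop : Continuous fun t : ℝ => t ^ 2 + y ^ 2).continuousAt.eventually_const_lt hs
  exact ((h' x y hs).congr_of_eventuallyEq (ho.mono fun t ht => h t y ht)).deriv

theorem pdy_eq {f g g' : ℝ → ℝ → ℝ}
    (h : ∀ x y, 0 < x ^ 2 + y ^ 2 → f x y = g x y)
    (h' : ∀ x y, 0 < x ^ 2 + y ^ 2 → HasDerivAt (fun t => g x t) (g' x y) y) :
    ∀ x y, 0 < x ^ 2 + y ^ 2 → pdy f x y = g' x y := by
  intro x y hs
  have ho : ∀ᶠ t in nhds y, 0 < x ^ 2 + t ^ 2 :=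
    (by fun_prop : Continuous fun t : ℝ => x ^ 2 + t ^ 2).continuousAt.eventually_const_lt hs
  exact ((h' x y hs).congr_of_eventuallyEq (ho.mono fun t ht => h x t ht)).deriv

theorem hasDerivAt_sq_add (x y : ℝ) : HasDerivAt (fun t : ℝ => t ^ 2 + y ^ 2) (2 * x) x := by
  simpa using (hasDerivAt_pow 2 x).add_const (y ^ 2)

theorem hasDerivAt_add_sq (x y : ℝ) : HasDerivAt (fun t : ℝ => x ^ 2 + t ^ 2) (2 * y) y := by
  simpa using (hasDerivAt_pow 2 y).const_add (x ^ 2)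

/-- A quartic even in `t`; this covers every slice of `Q` in either variable. -/
theorem hasDerivAt_quartic (a b c t : ℝ) :
    HasDerivAt (fun t : ℝ => a * t ^ 4 + b * t ^ 2 + c) (4 * a * t ^ 3 + 2 * b * t) t := by
  have h := (((hasDerivAt_pow 4 t).const_mul a).add ((hasDerivAt_pow 2 t).const_mul b)).add_const c
  refine h.congr_deriv ?_
  norm_num
  ring

theorem hasDerivAt_Q_left (x y : ℝ) :
    HasDerivAt (fun t => Q t y) (4 * x ^ 3 - 12 * y ^ 2 * x) x := by
  refine ((hasDerivAt_quartic 1 (-6 * y ^ 2) (y ^ 4) x).congr_deriv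
    (by ring)).congr_of_eventuallyEq (.of_forall fun t => ?_)
  simp only [Q]
  ring

theorem hasDerivAt_Q_right (x y : ℝ) :
    HasDerivAt (fun t => Q x t) (4 * y ^ 3 - 12 * x ^ 2 * y) y := by
  refine ((hasDerivAt_quartic 1 (-6 * x ^ 2) (x ^ 4) y).congr_deriv
    (by ring)).congr_of_eventuallyEq (.of_forall fun t => ?_)
  simp only [Q]
  ring

theorem hasDerivAt_cubic (a b t : ℝ) :
    HasDerivAt (fun t : ℝ => a * t ^ 3 + b * t) (3 * a * t ^ 2 + b) t := by
  have h := ((hasDerivAt_pow 3 t).const_mul a).add ((hasDerivAt_id t).const_mul b)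
  refine h.congr_deriv ?_
  norm_num
  ring

theorem pdx_G : ∀ x y : ℝ, 0 < x ^ 2 + y ^ 2 → pdx G x y =
    (4 * x ^ 3 - 12 * y ^ 2 * x) * Real.log (x ^ 2 + y ^ 2)
      + Q x y * (2 * x / (x ^ 2 + y ^ 2)) := by
  refine pdx_eq (g := G) (fun _ _ _ => rfl) fun x y hs => ?_
  exact (hasDerivAt_Q_left x y).mul ((hasDerivAt_sq_add x y).log hs.ne')

theorem pdy_G : ∀ x y : ℝ, 0 < x ^ 2 + y ^ 2 → pdy G x y =
    (4 * y ^ 3 - 12 * x ^ 2 * y) * Real.log (x ^ 2 + y ^ 2)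
      + Q x y * (2 * y / (x ^ 2 + y ^ 2)) := by
  refine pdy_eq (g := G) (fun _ _ _ => rfl) fun x y hs => ?_
  exact (hasDerivAt_Q_right x y).mul ((hasDerivAt_add_sq x y).log hs.ne')

theorem pdx_pdx_G : ∀ x y : ℝ, 0 < x ^ 2 + y ^ 2 → pdx (pdx G) x y =
    (12 * x ^ 2 - 12 * y ^ 2) * Real.log (x ^ 2 + y ^ 2)
      + 2 * (4 * x ^ 3 - 12 * y ^ 2 * x) * (2 * x / (x ^ 2 + y ^ 2))
      + Q x y * ((2 * (x ^ 2 + y ^ 2) - 4 * x ^ 2) / (x ^ 2 + y ^ 2) ^ 2) := by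
  refine pdx_eq pdx_G fun x y hs => ?_
  have hQ' : HasDerivAt (fun t => 4 * t ^ 3 - 12 * y ^ 2 * t) (12 * x ^ 2 - 12 * y ^ 2) x := by
    refine ((hasDerivAt_cubic 4 (-12 * y ^ 2) x).congr_deriv (by ring)).congr_of_eventuallyEq
      (.of_forall fun t => ?_)
    ring
  have hs' := hasDerivAt_sq_add x y
  refine ((hQ'.mul (hs'.log hs.ne')).add
    ((hasDerivAt_Q_left x y).mul (((hasDerivAt_id x).const_mul 2).div hs' hs.ne'))).congr_deriv ?_
  simp only [id, Pi.div_apply]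
  ring

theorem pdy_pdy_G : ∀ x y : ℝ, 0 < x ^ 2 + y ^ 2 → pdy (pdy G) x y =
    (12 * y ^ 2 - 12 * x ^ 2) * Real.log (x ^ 2 + y ^ 2)
      + 2 * (4 * y ^ 3 - 12 * x ^ 2 * y) * (2 * y / (x ^ 2 + y ^ 2))
      + Q x y * ((2 * (x ^ 2 + y ^ 2) - 4 * y ^ 2) / (x ^ 2 + y ^ 2) ^ 2) := by
  refine pdy_eq pdy_G fun x y hs => ?_
  have hQ' : HasDerivAt (fun t => 4 * t ^ 3 - 12 * x ^ 2 * t) (12 * y ^ 2 - 12 * x ^ 2) y := by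
    refine ((hasDerivAt_cubic 4 (-12 * x ^ 2) y).congr_deriv (by ring)).congr_of_eventuallyEq
      (.of_forall fun t => ?_)
    ring
  have hs' := hasDerivAt_add_sq x y
  refine ((hQ'.mul (hs'.log hs.ne')).add
    ((hasDerivAt_Q_right x y).mul (((hasDerivAt_id y).const_mul 2).div hs' hs.ne'))).congr_deriv ?_
  simp only [id, Pi.div_apply]
  ring

/-- This is `ΔG = 16 Q / s`, with `Q = s² - 8x²y²` substituted; the logarithms cancel because `Q` is
harmonic. -/
theorem lap_G (x y : ℝ) (hs : 0 < x ^ 2 + y ^ 2) :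
    lap G x y = 16 * (x ^ 2 + y ^ 2) - 128 * (x ^ 2 * y ^ 2 / (x ^ 2 + y ^ 2)) := by
  rw [lap, pdx_pdx_G x y hs, pdy_pdy_G x y hs, Q]
  have := hs.ne'
  field_simp
  ring

theorem pdx_lap_G : ∀ x y : ℝ, 0 < x ^ 2 + y ^ 2 → pdx (lap G) x y =
    32 * x - 256 * (x * y ^ 4 / (x ^ 2 + y ^ 2) ^ 2) := by
  refine pdx_eq lap_G fun x y hs => ?_
  have hs' := hasDerivAt_sq_add x y
  refine ((hs'.const_mul 16).sub
    ((((hasDerivAt_pow 2 x).mul_const (y ^ 2)).div hs' hs.ne').const_mul 128)).congr_deriv ?_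
  have := hs.ne'
  field_simp
  push_cast
  ring

theorem pdy_lap_G : ∀ x y : ℝ, 0 < x ^ 2 + y ^ 2 → pdy (lap G) x y =
    32 * y - 256 * (y * x ^ 4 / (x ^ 2 + y ^ 2) ^ 2) := by
  refine pdy_eq lap_G fun x y hs => ?_
  have hs' := hasDerivAt_add_sq x y
  refine ((hs'.const_mul 16).sub
    ((((hasDerivAt_pow 2 y).const_mul (x ^ 2)).div hs' hs.ne').const_mul 128)).congr_deriv ?_
  have := hs.ne'
  field_simp
  push_cast
  ring

theorem pdx_pdx_lap_G : ∀ x y : ℝ, 0 < x ^ 2 + y ^ 2 → pdx (pdx (lap G)) x y =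
    32 - 256 * (y ^ 4 * (y ^ 2 - 3 * x ^ 2) / (x ^ 2 + y ^ 2) ^ 3) := by
  refine pdx_eq pdx_lap_G fun x y hs => ?_
  refine (((hasDerivAt_id x).const_mul 32).sub
    ((((hasDerivAt_id x).mul_const (y ^ 4)).div ((hasDerivAt_sq_add x y).pow 2)
      (pow_ne_zero 2 hs.ne')).const_mul 256)).congr_deriv ?_
  have := hs.ne'
  simp only [id, Pi.pow_apply]
  field_simp
  push_cast
  ring

theorem pdy_pdy_lap_G : ∀ x y : ℝ, 0 < x ^ 2 + y ^ 2 → pdy (pdy (lap G)) x y =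
    32 - 256 * (x ^ 4 * (x ^ 2 - 3 * y ^ 2) / (x ^ 2 + y ^ 2) ^ 3) := by
  refine pdy_eq pdy_lap_G fun x y hs => ?_
  refine (((hasDerivAt_id y).const_mul 32).sub
    ((((hasDerivAt_id y).mul_const (x ^ 4)).div ((hasDerivAt_add_sq x y).pow 2)
      (pow_ne_zero 2 hs.ne')).const_mul 256)).congr_deriv ?_
  have := hs.ne'
  simp only [id, Pi.pow_apply]
  field_simp
  push_cast
  ring

theorem pdy_pdx_lap_G : ∀ x y : ℝ, 0 < x ^ 2 + y ^ 2 → pdy (pdx (lap G)) x y =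
    -1024 * ((x * y) ^ 3 / (x ^ 2 + y ^ 2) ^ 3) := by
  refine pdy_eq pdx_lap_G fun x y hs => ?_
  refine ((((((hasDerivAt_pow 4 y).const_mul x)).div ((hasDerivAt_add_sq x y).pow 2)
      (pow_ne_zero 2 hs.ne')).const_mul 256).const_sub (32 * x)).congr_deriv ?_
  have := hs.ne'
  simp only [Pi.pow_apply]
  field_simp
  push_cast
  ring

theorem pdx_pdy_lap_G : ∀ x y : ℝ, 0 < x ^ 2 + y ^ 2 → pdx (pdy (lap G)) x y =
    -1024 * ((x * y) ^ 3 / (x ^ 2 + y ^ 2) ^ 3) := by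
  refine pdx_eq pdy_lap_G fun x y hs => ?_
  refine ((((((hasDerivAt_pow 4 x).const_mul y)).div ((hasDerivAt_sq_add x y).pow 2)
      (pow_ne_zero 2 hs.ne')).const_mul 256).const_sub (32 * y)).congr_deriv ?_
  have := hs.ne'
  simp only [Pi.pow_apply]
  field_simp
  push_cast
  ring

theorem abs_pure_le {u v : ℝ} (hu : 0 ≤ u) (hv : 0 ≤ v) (hs : 0 < u + v) :
    |v ^ 2 * (v - 3 * u) / (u + v) ^ 3| ≤ 3 := by
  rw [abs_div, abs_of_pos (pow_pos hs 3), div_le_iff₀ (pow_pos hs 3), abs_mul,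
    abs_of_nonneg (sq_nonneg v)]
  have h1 : |v - 3 * u| ≤ 3 * (u + v) := abs_le.2 ⟨by linarith, by linarith⟩
  have h2 : v ^ 2 ≤ (u + v) ^ 2 := by gcongr; linarith
  calc v ^ 2 * |v - 3 * u| ≤ (u + v) ^ 2 * (3 * (u + v)) := by gcongr
    _ = 3 * (u + v) ^ 3 := by ring

theorem abs_mixed_le {x y : ℝ} (hs : 0 < x ^ 2 + y ^ 2) :
    |(x * y) ^ 3 / (x ^ 2 + y ^ 2) ^ 3| ≤ 1 := by
  rw [abs_div, abs_of_pos (pow_pos hs 3), div_le_one (pow_pos hs 3), abs_pow]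
  gcongr
  exact abs_le.2 ⟨by nlinarith [sq_nonneg (x + y)], by nlinarith [sq_nonneg (x - y)]⟩

/-- All second partial derivatives `∂ᵢ∂ⱼ(ΔG)` are bounded on the punctured unit ball. -/
theorem second_derivs_of_laplacian_G_bounded :
    ∀ i j : Fin 2, ∃ M > (0 : ℝ), ∀ x y : ℝ,
      0 < x ^ 2 + y ^ 2 → x ^ 2 + y ^ 2 < 1 →
      |pd i (pd j (lap G)) x y| ≤ M := by
  intro i j
  -- The pure second derivatives are at most `32 + 256 * 3 = 800`, the mixed ones at most `1024`.
  refine ⟨1024, by norm_num, fun x y hs _ => ?_⟩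
  have hm := abs_le.1 (abs_mixed_le hs)
  fin_cases i <;> fin_cases j
  · change |pdx (pdx (lap G)) x y| ≤ 1024
    have h := abs_le.1 (abs_pure_le (sq_nonneg x) (sq_nonneg y) hs)
    rw [← pow_mul] at h
    rw [pdx_pdx_lap_G x y hs, abs_le]
    constructor <;> linarith
  · change |pdx (pdy (lap G)) x y| ≤ 1024
    rw [pdx_pdy_lap_G x y hs, abs_le]
    constructor <;> linarith
  · change |pdy (pdx (lap G)) x y| ≤ 1024
    rw [pdy_pdx_lap_G x y hs, abs_le]
    constructor <;> linarith
  · change |pdy (pdy (lap G)) x y| ≤ 1024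
    have h := abs_le.1 (abs_pure_le (sq_nonneg y) (sq_nonneg x) (by linarith))
    rw [← pow_mul, add_comm (y ^ 2)] at h
    rw [pdy_pdy_lap_G x y hs, abs_le]
    constructor <;> linarith
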